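/- Let s ≥ 1, let 0 ≤ q ≤ s, and set n = T_s + q. For every pair of natural numbers (a, b) with a + b = ρ(q) and T_a + T_b ≤ q, there exists a partition λ of n with deg(λ) = Δ_n, A(λ) = a, and B(λ) = b. Hence the set of pairs (A(λ), B(λ)) realized by degree-maximizing partitions of n is exactly {(a,b) ∈ ℕ² : a + b = ρ(q), T_a + T_b ≤ q}. -/

import Mathlib

/-!
Let `λ ⊢ T s + q` with `q ≤ s` have `r` part sizes, `a` gaps and `b` repeated sizes.

A finite set `S` of positive integers with gaps directly below `a` of its elements satisfies
`T #S + T a ≤ ∑ S`: its maximum `m` is at least `#S + a`, because the `a` missing predecessors are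
distinct integers in `[1, m] \ S`, while removing `m` lowers the two triangular numbers by at most
`#S` and `a`. For the part sizes and the repeated sizes of `λ` this gives
`T r + T a + T b ≤ T s + q`, hence `r ≤ s`. If `r = s`, then `T a + T b ≤ q`, so `a + b ≤ ρ(q)`
and `deg λ ≤ s (s - 1) + ρ(q)`. If `r < s`, then `a, b ≤ r` gives `deg λ ≤ r (r + 1) ≤ s (s - 1)`.
Here `deg λ = s (s - 1) + ρ(q)` would need `s = r + 1`, `q = 0` and `a = b = r`; but then the sizes
sum to at least `2 T r` and each occurs twice, so `4 T r ≤ T (r + 1)`, which is false for `r ≥ 1`.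

Conversely, a pair with `a + b = ρ(q)` and `T a + T b ≤ q` is realized by the sizes `1, …, s - a`,
then `a` sizes with a gap below each, with `1, …, b` repeated. The remaining `q - T a - T b` is
added to the largest size, which widens its gap; if `a = 0` there is no such gap, but then
maximality of `a + b` leaves no remainder.
-/

namespace PartitionDegree

/-- The `m`-th triangular number. -/
def T (m : ℕ) : ℕ := m * (m + 1) / 2

/-- The number of distinct part sizes of a partition. -/
def supp {n : ℕ} (lam : n.Partition) : ℕ := lam.parts.toFinset.card

/-- The gap-bonus count: distinct part sizes `L ≥ 2` such that `L - 1` is not a part size. -/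
def gapBonus {n : ℕ} (lam : n.Partition) : ℕ :=
  (lam.parts.toFinset.filter (fun L => 2 ≤ L ∧ (L - 1) ∉ lam.parts)).card

/-- The multiplicity-bonus count: distinct part sizes occurring with multiplicity at least 2. -/
def multBonus {n : ℕ} (lam : n.Partition) : ℕ :=
  (lam.parts.toFinset.filter (fun L => 2 ≤ lam.parts.count L)).card

/-- The degree of a partition in the partition graph. -/
def deg {n : ℕ} (lam : n.Partition) : ℕ :=
  supp lam * (supp lam - 1) + gapBonus lam + multBonus lam

/-- The maximal degree over all partitions of `n`. -/
def maxDeg (n : ℕ) : ℕ := Finset.univ.sup (fun lam : n.Partition => deg lam)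

/-- `ρ(q)`: the maximum of `a + b` over pairs with `T a + T b ≤ q`. -/
noncomputable def rho (q : ℕ) : ℕ := sSup {c : ℕ | ∃ a b : ℕ, c = a + b ∧ T a + T b ≤ q}

/-- `mu` is the conjugate of `lam`: for each `k ≥ 1`, the multiplicity of `k` in `mu`
equals (number of parts of `lam` that are `≥ k`) minus (number of parts `≥ k + 1`). -/
def IsConjugate {n : ℕ} (lam mu : n.Partition) : Prop :=
  ∀ k : ℕ, 1 ≤ k →
    mu.parts.count k =
      Multiset.countP (fun p => k ≤ p) lam.parts -
        Multiset.countP (fun p => k + 1 ≤ p) lam.parts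

section Triangular

lemma T_succ (m : ℕ) : T (m + 1) = T m + (m + 1) := by
  simpa [T, mul_comm] using Nat.triangle_succ (m + 1)

lemma T_mono : Monotone T :=
  monotone_nat_of_le_succ fun m => by rw [T_succ]; omega

lemma le_T (m : ℕ) : m ≤ T m := by
  cases m with
  | zero => exact Nat.zero_le _
  | succ k => rw [T_succ]; omega

lemma sum_Icc_one_eq_T (m : ℕ) : ∑ x ∈ Finset.Icc 1 m, x = T m := by
  induction m with
  | zero => rfl
  | succ k ih => rw [Finset.sum_Icc_succ_top (by omega), ih, T_succ]

lemma isGreatest_rho (q : ℕ) :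
    IsGreatest {c : ℕ | ∃ a b : ℕ, c = a + b ∧ T a + T b ≤ q} (rho q) := by
  have hne : {c : ℕ | ∃ a b : ℕ, c = a + b ∧ T a + T b ≤ q}.Nonempty :=
    ⟨0, 0, 0, rfl, Nat.zero_le q⟩
  have hbdd : BddAbove {c : ℕ | ∃ a b : ℕ, c = a + b ∧ T a + T b ≤ q} := by
    refine ⟨q, ?_⟩
    rintro _ ⟨a, b, rfl, h⟩
    exact (add_le_add (le_T a) (le_T b)).trans h
  exact ⟨Nat.sSup_mem hne hbdd, fun _ hc => le_csSup hbdd hc⟩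

lemma add_le_rho {a b q : ℕ} (h : T a + T b ≤ q) : a + b ≤ rho q :=
  (isGreatest_rho q).2 ⟨a, b, rfl, h⟩

lemma exists_add_eq_rho (q : ℕ) : ∃ a b : ℕ, a + b = rho q ∧ T a + T b ≤ q := by
  obtain ⟨a, b, hab, hT⟩ := (isGreatest_rho q).1
  exact ⟨a, b, hab.symm, hT⟩

lemma rho_pos {q : ℕ} (hq : 0 < q) : 0 < rho q :=
  add_le_rho (a := 1) (b := 0) hq

lemma lt_T_succ_add_T {a b q : ℕ} (hab : a + b = rho q) : q < T (a + 1) + T b := by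
  by_contra! h
  have := add_le_rho h
  omega

end Triangular

section Gaps

/-- The elements `L ≥ 2` of `S` lying directly above a gap of `S`, so that
`gapBonus lam = (gaps lam.parts.toFinset).card`. -/
def gaps (S : Finset ℕ) : Finset ℕ := S.filter fun L => 2 ≤ L ∧ L - 1 ∉ S

lemma mem_gaps {S : Finset ℕ} {L : ℕ} : L ∈ gaps S ↔ L ∈ S ∧ 2 ≤ L ∧ L - 1 ∉ S :=
  Finset.mem_filter

lemma gaps_insert_subset (S : Finset ℕ) (m : ℕ) : gaps (insert m S) ⊆ insert m (gaps S) := by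
  intro x hx
  simp only [mem_gaps, Finset.mem_insert] at hx ⊢
  tauto

lemma gaps_insert_of_add_one_lt {S : Finset ℕ} {m : ℕ} (hm : 2 ≤ m) (h : ∀ x ∈ S, x + 1 < m) :
    gaps (insert m S) = insert m (gaps S) := by
  refine (gaps_insert_subset S m).antisymm fun x hx => ?_
  simp only [mem_gaps, Finset.mem_insert] at hx ⊢
  rcases hx with rfl | ⟨hxS, hx2, hpred⟩
  · refine ⟨.inl rfl, hm, ?_⟩
    rintro (heq | hmem)
    · omega
    · exact absurd (h _ hmem) (by omega)
  · have := h x hxS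
    exact ⟨.inr hxS, hx2, not_or_intro (by omega) hpred⟩

lemma gaps_Icc_one (c : ℕ) : gaps (Finset.Icc 1 c) = ∅ := by
  ext L
  simp only [mem_gaps, Finset.mem_Icc, Finset.notMem_empty, iff_false]
  omega

lemma card_add_card_gaps_le {S : Finset ℕ} {M : ℕ} (hS : S ⊆ Finset.Icc 1 M) :
    S.card + (gaps S).card ≤ M := by
  have hinj : Set.InjOn (· - 1) (gaps S : Set ℕ) := by
    intro x hx y hy hxy
    have := (mem_gaps.1 hx).2.1
    have := (mem_gaps.1 hy).2.1
    dsimp only at hxy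
    omega
  have hdisj : Disjoint S ((gaps S).image (· - 1)) := by
    rw [Finset.disjoint_right, Finset.forall_mem_image]
    exact fun L hL => (mem_gaps.1 hL).2.2
  have hsub : (gaps S).image (· - 1) ⊆ Finset.Icc 1 M := by
    rw [Finset.image_subset_iff]
    intro L hL
    obtain ⟨hLS, hL2, -⟩ := mem_gaps.1 hL
    have := Finset.mem_Icc.1 (hS hLS)
    exact Finset.mem_Icc.2 (by omega)
  calc S.card + (gaps S).card
      = (S ∪ (gaps S).image (· - 1)).card := by
        rw [Finset.card_union_of_disjoint hdisj, Finset.card_image_of_injOn hinj]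
    _ ≤ (Finset.Icc 1 M).card := Finset.card_le_card (Finset.union_subset hS hsub)
    _ = M := Nat.card_Icc 1 M

lemma T_card_add_T_card_gaps_le_sum {S : Finset ℕ} (hS : ∀ x ∈ S, 0 < x) :
    T S.card + T (gaps S).card ≤ ∑ x ∈ S, x := by
  induction S using Finset.induction_on_max with
  | empty => rfl
  | insert m S hm ih =>
    have hmS : m ∉ S := fun h => (hm m h).false
    have hbound : (insert m S).card + (gaps (insert m S)).card ≤ m :=
      card_add_card_gaps_le fun x hx => Finset.mem_Icc.2
        ⟨hS x hx, (Finset.mem_insert.1 hx).elim Eq.le fun h => (hm x h).le⟩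
    have hgaps : (gaps (insert m S)).card ≤ (gaps S).card + 1 :=
      (Finset.card_le_card (gaps_insert_subset S m)).trans (Finset.card_insert_le _ _)
    have ih := ih fun x hx => hS x (Finset.mem_insert_of_mem hx)
    rw [Finset.card_insert_of_notMem hmS] at hbound ⊢
    rw [Finset.sum_insert hmS, T_succ]
    -- With `S' = insert m S`, the two triangular numbers grow by at most `#S'` and `#(gaps S')`.
    rcases hgaps.lt_or_eq with hlt | heq
    · have := T_mono (Nat.le_of_lt_succ hlt)
      omega
    · rw [heq] at hbound ⊢
      rw [T_succ]
      omega

lemma T_card_le_sum {S : Finset ℕ} (hS : ∀ x ∈ S, 0 < x) : T S.card ≤ ∑ x ∈ S, x :=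
  le_self_add.trans (T_card_add_T_card_gaps_le_sum hS)

end Gaps

section Repeated

variable {α : Type*} [DecidableEq α]

/-- The elements of `m` of multiplicity at least `2`, so that
`multBonus lam = (repeated lam.parts).card`. -/
def repeated (m : Multiset α) : Finset α := m.toFinset.filter fun x => 2 ≤ m.count x

lemma repeated_subset (m : Multiset α) : repeated m ⊆ m.toFinset :=
  Finset.filter_subset _ _

lemma count_val (S : Finset α) (x : α) : S.val.count x = if x ∈ S then 1 else 0 :=
  Multiset.count_eq_of_nodup S.nodup

lemma toFinset_val_add_repeated_val_le (m : Multiset α) :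
    m.toFinset.val + (repeated m).val ≤ m := by
  rw [Multiset.le_iff_count]
  intro x
  simp only [Multiset.count_add, count_val, repeated, Finset.mem_filter, Multiset.mem_toFinset,
    ← Multiset.one_le_count_iff_mem]
  split_ifs <;> omega

variable {S D : Finset α}

lemma toFinset_val_add_val (h : D ⊆ S) : (S.val + D.val).toFinset = S := by
  rw [Multiset.toFinset_add, Finset.val_toFinset, Finset.val_toFinset, Finset.union_eq_left.2 h]

lemma repeated_val_add_val (h : D ⊆ S) : repeated (S.val + D.val) = D := by
  ext x
  have hmem := @h x
  rw [repeated, toFinset_val_add_val h, Finset.mem_filter, Multiset.count_add, count_val,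
    count_val]
  split_ifs <;> simp_all

end Repeated

section UpperBound

variable {n : ℕ} (lam : n.Partition)

lemma gapBonus_eq_card_gaps : gapBonus lam = (gaps lam.parts.toFinset).card := by
  simp only [gapBonus, gaps, Multiset.mem_toFinset]

lemma gapBonus_le_supp : gapBonus lam ≤ supp lam :=
  Finset.card_filter_le _ _

lemma multBonus_le_supp : multBonus lam ≤ supp lam :=
  Finset.card_filter_le _ _

lemma pos_of_mem_toFinset {x : ℕ} (hx : x ∈ lam.parts.toFinset) : 0 < x :=
  lam.parts_pos (Multiset.mem_toFinset.1 hx)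

lemma sum_toFinset_add_sum_repeated_le :
    ∑ x ∈ lam.parts.toFinset, x + ∑ x ∈ repeated lam.parts, x ≤ n := by
  obtain ⟨m, hm⟩ := Multiset.le_iff_exists_add.1 (toFinset_val_add_repeated_val_le lam.parts)
  have hsum := congrArg Multiset.sum hm
  simp only [lam.parts_sum, Multiset.sum_add, Finset.sum_val, id] at hsum
  omega

lemma T_supp_add_T_gapBonus_le_sum :
    T (supp lam) + T (gapBonus lam) ≤ ∑ x ∈ lam.parts.toFinset, x := by
  rw [gapBonus_eq_card_gaps]
  exact T_card_add_T_card_gaps_le_sum fun x => pos_of_mem_toFinset lam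

lemma T_supp_add_T_gapBonus_add_T_multBonus_le :
    T (supp lam) + T (gapBonus lam) + T (multBonus lam) ≤ n := by
  have hmult : T (multBonus lam) ≤ ∑ x ∈ repeated lam.parts, x :=
    T_card_le_sum fun x hx => pos_of_mem_toFinset lam (repeated_subset _ hx)
  exact (add_le_add (T_supp_add_T_gapBonus_le_sum lam) hmult).trans
    (sum_toFinset_add_sum_repeated_le lam)

lemma four_mul_T_supp_le (hgap : gapBonus lam = supp lam) (hmult : multBonus lam = supp lam) :
    4 * T (supp lam) ≤ n := by
  have hrep : repeated lam.parts = lam.parts.toFinset :=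
    Finset.eq_of_subset_of_card_le (repeated_subset _) hmult.ge
  have hn := sum_toFinset_add_sum_repeated_le lam
  have hsum := T_supp_add_T_gapBonus_le_sum lam
  rw [hrep] at hn
  rw [hgap] at hsum
  omega

lemma supp_pos (hn : 0 < n) : 0 < supp lam := by
  rw [supp, Finset.card_pos, Multiset.toFinset_nonempty]
  intro h
  have := lam.parts_sum
  rw [h, Multiset.sum_zero] at this
  omega

lemma supp_le_of_lt_T_succ {s : ℕ} (hn : n < T (s + 1)) : supp lam ≤ s := by
  by_contra! h
  have := T_mono (show s + 1 ≤ supp lam from h)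
  have := T_supp_add_T_gapBonus_add_T_multBonus_le lam
  omega

end UpperBound

section Maximizers

variable {s q : ℕ}

lemma deg_lt_of_supp_lt (lam : (T s + q).Partition) (h : supp lam < s) :
    deg lam < s * (s - 1) + rho q := by
  by_contra! hdeg
  -- Equality must hold throughout `deg lam ≤ (supp lam + 1) * supp lam ≤ s * (s - 1)`.
  obtain ⟨hgap, hmult, hrho, hs⟩ :
      gapBonus lam = supp lam ∧ multBonus lam = supp lam ∧ rho q = 0 ∧ s = supp lam + 1 := by
    have hgap := gapBonus_le_supp lam
    have hmult := multBonus_le_supp lam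
    have hpred : supp lam * (supp lam - 1) + 2 * supp lam = (supp lam + 1) * supp lam := by
      cases supp lam with
      | zero => rfl
      | succ r => rw [Nat.add_sub_cancel]; ring
    have hmul : (supp lam + 1) * supp lam ≤ s * (s - 1) :=
      Nat.mul_le_mul h (Nat.le_sub_one_of_lt h)
    unfold deg at hdeg
    refine ⟨by omega, by omega, by omega, ?_⟩
    by_contra hne
    have : (supp lam + 1) * supp lam < s * (s - 1) :=
      Nat.mul_lt_mul_of_le_of_lt h (by omega) (by omega)
    omega
  obtain rfl : q = 0 := by
    by_contra hq
    exact (rho_pos (Nat.pos_of_ne_zero hq)).ne' hrho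
  have hfour := four_mul_T_supp_le lam hgap hmult
  have hT : T s = T (supp lam) + (supp lam + 1) := by rw [← T_succ, ← hs]
  have hle := le_T (supp lam)
  have hpos := supp_pos lam (by omega)
  omega

lemma supp_le (hqs : q ≤ s) (lam : (T s + q).Partition) : supp lam ≤ s :=
  supp_le_of_lt_T_succ lam (by rw [T_succ]; omega)

lemma T_gapBonus_add_T_multBonus_le (lam : (T s + q).Partition) (h : supp lam = s) :
    T (gapBonus lam) + T (multBonus lam) ≤ q := by
  have := T_supp_add_T_gapBonus_add_T_multBonus_le lam
  rw [h] at this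
  omega

lemma deg_le (hqs : q ≤ s) (lam : (T s + q).Partition) : deg lam ≤ s * (s - 1) + rho q := by
  rcases (supp_le hqs lam).lt_or_eq with hlt | heq
  · exact (deg_lt_of_supp_lt lam hlt).le
  · have := add_le_rho (T_gapBonus_add_T_multBonus_le lam heq)
    rw [deg, heq]
    omega

lemma profile_of_deg_eq (hqs : q ≤ s) {lam : (T s + q).Partition}
    (h : deg lam = s * (s - 1) + rho q) :
    gapBonus lam + multBonus lam = rho q ∧ T (gapBonus lam) + T (multBonus lam) ≤ q := by
  have hsupp : supp lam = s :=
    (supp_le hqs lam).eq_of_not_lt fun hlt => (deg_lt_of_supp_lt lam hlt).ne h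
  refine ⟨?_, T_gapBonus_add_T_multBonus_le lam hsupp⟩
  rw [deg, hsupp] at h
  omega

end Maximizers

section Construction

/-- The staircase `1, …, c` followed by the `a` sizes `c + 2, c + 4, …, c + 2 * a`, the last of
which is raised by `d`. These are the part sizes of the realizing partitions; `d` takes up the
part of `n` that the gaps and the repetitions leave over, and is ignored if `a = 0`. -/
def gappedStaircase (c : ℕ) : ℕ → ℕ → Finset ℕ
  | 0, _ => Finset.Icc 1 c
  | a + 1, d => insert (c + 2 * (a + 1) + d) (gappedStaircase c a 0)

variable (c a d : ℕ)

lemma gappedStaircase_subset_Icc : gappedStaircase c a d ⊆ Finset.Icc 1 (c + 2 * a + d) := by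
  induction a generalizing d with
  | zero => exact Finset.Icc_subset_Icc_right (by omega)
  | succ a ih =>
    refine Finset.insert_subset (Finset.mem_Icc.2 (by omega)) ?_
    exact (ih 0).trans (Finset.Icc_subset_Icc_right (by omega))

lemma add_one_lt_of_mem_gappedStaircase {x : ℕ} (hx : x ∈ gappedStaircase c a 0) :
    x + 1 < c + 2 * (a + 1) + d := by
  have := Finset.mem_Icc.1 (gappedStaircase_subset_Icc c a 0 hx)
  omega

lemma notMem_gappedStaircase : c + 2 * (a + 1) + d ∉ gappedStaircase c a 0 := fun h => by
  have := add_one_lt_of_mem_gappedStaircase c a d h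
  omega

lemma Icc_subset_gappedStaircase : Finset.Icc 1 c ⊆ gappedStaircase c a d := by
  induction a generalizing d with
  | zero => exact subset_rfl
  | succ a ih => exact (ih 0).trans (Finset.subset_insert _ _)

lemma card_gappedStaircase : (gappedStaircase c a d).card = c + a := by
  induction a generalizing d with
  | zero => exact Nat.card_Icc 1 c
  | succ a ih =>
    rw [gappedStaircase, Finset.card_insert_of_notMem (notMem_gappedStaircase c a d), ih, add_assoc]

lemma card_gaps_gappedStaircase : (gaps (gappedStaircase c a d)).card = a := by
  induction a generalizing d with
  | zero => rw [gappedStaircase, gaps_Icc_one, Finset.card_empty]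
  | succ a ih =>
    rw [gappedStaircase, gaps_insert_of_add_one_lt (by omega)
      fun x => add_one_lt_of_mem_gappedStaircase c a d, Finset.card_insert_of_notMem, ih]
    exact fun h => notMem_gappedStaircase c a d (mem_gaps.1 h).1

variable {a d} in
lemma sum_gappedStaircase (hd : a = 0 → d = 0) :
    ∑ x ∈ gappedStaircase c a d, x = T (c + a) + T a + d := by
  induction a generalizing d with
  | zero => rw [gappedStaircase, sum_Icc_one_eq_T, hd rfl]; rfl
  | succ a ih =>
    rw [gappedStaircase, Finset.sum_insert (notMem_gappedStaircase c a d), ih fun _ => rfl,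
      ← add_assoc c, T_succ, T_succ]
    omega

lemma exists_partition_of_subset {S D : Finset ℕ} {n : ℕ} (hS : ∀ x ∈ S, 0 < x) (hDS : D ⊆ S)
    (hn : ∑ x ∈ S, x + ∑ x ∈ D, x = n) :
    ∃ lam : n.Partition,
      supp lam = S.card ∧ gapBonus lam = (gaps S).card ∧ multBonus lam = D.card := by
  let lam : n.Partition :=
    { parts := S.val + D.val
      parts_pos := fun hx => (Multiset.mem_add.1 hx).elim (hS _) fun h => hS _ (hDS h)
      parts_sum := by simpa only [Multiset.sum_add, Finset.sum_val, id] using hn }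
  have hset : lam.parts.toFinset = S := toFinset_val_add_val hDS
  refine ⟨lam, congrArg Finset.card hset, ?_, congrArg Finset.card (repeated_val_add_val hDS)⟩
  rw [gapBonus_eq_card_gaps, hset]

lemma exists_partition_of_profile {s q a b : ℕ} (hqs : q ≤ s) (hab : a + b = rho q)
    (hT : T a + T b ≤ q) :
    ∃ lam : (T s + q).Partition,
      deg lam = s * (s - 1) + rho q ∧ gapBonus lam = a ∧ multBonus lam = b := by
  have habs : a + b ≤ s := (add_le_add (le_T a) (le_T b)).trans (hT.trans hqs)
  obtain ⟨c, rfl⟩ := Nat.exists_eq_add_of_le' (le_of_add_le_left habs)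
  obtain ⟨d, rfl⟩ := Nat.exists_eq_add_of_le hT
  have hd : a = 0 → d = 0 := by
    rintro rfl
    have := lt_T_succ_add_T hab
    rw [T_succ] at this
    omega
  obtain ⟨lam, hsupp, hgap, hmult⟩ := exists_partition_of_subset
    (S := gappedStaircase c a d) (D := Finset.Icc 1 b) (n := T (c + a) + (T a + T b + d))
    (fun x hx => (Finset.mem_Icc.1 (gappedStaircase_subset_Icc c a d hx)).1)
    ((Finset.Icc_subset_Icc_right (by omega)).trans (Icc_subset_gappedStaircase c a d))
    (by rw [sum_gappedStaircase c hd, sum_Icc_one_eq_T]; omega)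
  rw [card_gappedStaircase] at hsupp
  rw [card_gaps_gappedStaircase] at hgap
  rw [Nat.card_Icc, Nat.add_sub_cancel] at hmult
  refine ⟨lam, ?_, hgap, hmult⟩
  rw [deg, hsupp, hgap, hmult, ← hab, add_assoc]

end Construction

lemma maxDeg_T_add {s q : ℕ} (hqs : q ≤ s) : maxDeg (T s + q) = s * (s - 1) + rho q := by
  obtain ⟨a, b, hab, hT⟩ := exists_add_eq_rho q
  obtain ⟨lam, hdeg, -, -⟩ := exists_partition_of_profile hqs hab hT
  refine le_antisymm (Finset.sup_le fun mu _ => deg_le hqs mu) ?_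
  rw [← hdeg]
  exact Finset.le_sup (f := deg) (Finset.mem_univ lam)

/-- realization of all admissible maximizing profiles: the set of pairs
`(A(λ), B(λ))` over maximizers `λ ⊢ T s + q` is exactly
`{(a,b) : a + b = ρ(q), T a + T b ≤ q}`. -/
theorem all_profiles_realized (s q : ℕ) (hs : 1 ≤ s) (hqs : q ≤ s) :
    (∀ a b : ℕ, a + b = rho q → T a + T b ≤ q →
        ∃ lam : (T s + q).Partition,
          deg lam = maxDeg (T s + q) ∧ gapBonus lam = a ∧ multBonus lam = b) ∧
      {p : ℕ × ℕ |
          ∃ lam : (T s + q).Partition,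
            deg lam = maxDeg (T s + q) ∧ gapBonus lam = p.1 ∧ multBonus lam = p.2} =
        {p : ℕ × ℕ | p.1 + p.2 = rho q ∧ T p.1 + T p.2 ≤ q} := by
  rw [maxDeg_T_add hqs]
  refine ⟨fun a b hab hT => exists_partition_of_profile hqs hab hT, ?_⟩
  ext ⟨a, b⟩
  constructor
  · rintro ⟨lam, hdeg, rfl, rfl⟩
    exact profile_of_deg_eq hqs hdeg
  · rintro ⟨hab, hT⟩
    exact exists_partition_of_profile hqs hab hT

end PartitionDegree
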